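/- arXiv:1608.05288 — 4 statements merged into one kernel-verified Lean document; each statement's English description precedes it below -/
import Mathlib

section
/- Let (f_i)_{i∈I} be a finite family of cost functions, x a variable, and B ⊆ I a subset such that for every i ∈ I \ B the function f_i does not depend on x. Then min over all complete assignments σ of Σ_{i ∈ I} f_i(σ) equals min over all complete assignments σ of [ Σ_{i ∈ I \ B} f_i(σ) + min_{d ∈ D x} Σ_{i ∈ B} f_i(σ[x := d]) ]. (Correctness of one variable-elimination step of Bucket Elimination: replacing the bucket B of x by the single bucket function π_{-x}(Σ_{i∈B} f_i) preserves the optimal cost.) -/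
open scoped ENNReal

/-- The projection `π_{-x} h`: the variable `x` is minimised out of the cost function `h`. The
result is still indexed by complete assignments, whose value at `x` it ignores; the infimum is a
minimum when `D x` is finite and nonempty. -/
def eliminate {V : Type*} [DecidableEq V] {D : V → Type*} {R : Type*} [InfSet R] (x : V)
    (h : (∀ v, D v) → R) (σ : ∀ v, D v) : R :=
  ⨅ d : D x, h (Function.update σ x d)

section

variable {V : Type*} [DecidableEq V] {D : V → Type*}

theorem iInf_eliminate {R : Type*} [CompleteLattice R] (x : V) (h : (∀ v, D v) → R) :
    ⨅ σ, eliminate x h σ = ⨅ σ, h σ := by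
  apply le_antisymm
  · refine iInf_mono fun σ => ?_
    calc
      eliminate x h σ ≤ h (Function.update σ x (σ x)) := iInf_le _ (σ x)
      _ = h σ := by rw [Function.update_eq_self]
  · exact le_iInf₂ fun σ d => iInf_le h (Function.update σ x d)

theorem eliminate_add_of_forall_eq_update {x : V} {g : (∀ v, D v) → ℝ≥0∞}
    (hg : ∀ σ (d : D x), g σ = g (Function.update σ x d)) (h : (∀ v, D v) → ℝ≥0∞) :
    eliminate x (g + h) = g + eliminate x h := by
  ext σ
  simp only [eliminate, Pi.add_apply, ← hg, ENNReal.add_iInf]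

theorem bucket_elimination_step_correct_general {I : Type*} (f : I → (∀ v, D v) → ℝ≥0∞) (x : V)
    (B : Set I)
    (hindep : ∀ i ∉ B, ∀ (σ : ∀ v, D v) (d : D x), f i σ = f i (Function.update σ x d)) :
    (⨅ σ : ∀ v, D v, ∑' i, f i σ)
      = ⨅ σ : ∀ v, D v,
          (∑' i : ↥Bᶜ, f i σ + ⨅ d : D x, ∑' i : B, f i (Function.update σ x d)) := by
  let rest (σ : ∀ v, D v) : ℝ≥0∞ := ∑' i : ↥Bᶜ, f i σ
  let bucket (σ : ∀ v, D v) : ℝ≥0∞ := ∑' i : B, f i σ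
  have rest_indep (σ) (d : D x) : rest σ = rest (Function.update σ x d) :=
    tsum_congr fun i => hindep i i.2 σ d
  have total_eq (σ) : ∑' i, f i σ = (rest + bucket) σ :=
    (ENNReal.summable.tsum_add_tsum_compl ENNReal.summable).symm.trans (add_comm _ _)
  calc
    ⨅ σ, ∑' i, f i σ = ⨅ σ, (rest + bucket) σ := iInf_congr total_eq
    _ = ⨅ σ, eliminate x (rest + bucket) σ := (iInf_eliminate x _).symm
    _ = ⨅ σ, (rest + eliminate x bucket) σ := by
      rw [eliminate_add_of_forall_eq_update rest_indep]

end

/-- **Correctness of one variable-elimination step of Bucket Elimination.**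
If `B ⊆ I` is the bucket of variable `x`, i.e. every `f i` with `i ∉ B` does not
depend on `x`, then the optimal cost `min_σ Σ_{i ∈ I} f i σ` equals
`min_σ (Σ_{i ∈ I \ B} f i σ + min_{d ∈ D x} Σ_{i ∈ B} f i (σ[x := d]))`. -/
theorem bucket_elimination_step_correct
    {V : Type*} [Fintype V] [DecidableEq V]
    {D : V → Type*} [∀ v, Fintype (D v)] [∀ v, Nonempty (D v)]
    {I : Type*} [Fintype I] [DecidableEq I]
    (f : I → (∀ v, D v) → ℝ≥0∞) (x : V) (B : Finset I)
    (hindep : ∀ i ∉ B, ∀ (σ : ∀ v, D v) (d : D x), f i σ = f i (Function.update σ x d)) :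
    (⨅ σ : ∀ v, D v, ∑ i : I, f i σ)
      = ⨅ σ : ∀ v, D v,
          (∑ i ∈ Bᶜ, f i σ + ⨅ d : D x, ∑ i ∈ B, f i (Function.update σ x d)) := by
  simp only [← tsum_fintype (L := .unconditional I), ← Finset.tsum_subtype']
  rw [Finset.coe_compl, bucket_elimination_step_correct_general f x B hindep]
end

section
/- Let (p_i)_{i∈I} be a finite family of functions from complete assignments to the nonnegative reals, x a variable, and B ⊆ I a subset such that for every i ∈ I \ B the function p_i does not depend on x. Then max over all complete assignments σ of Π_{i ∈ I} p_i(σ) equals max over all complete assignments σ of [ (Π_{i ∈ I \ B} p_i(σ)) · max_{d ∈ D x} Π_{i ∈ B} p_i(σ[x := d]) ]. (Correctness of one variable-elimination step of Bucket Elimination for the Most Probable Explanation task, where the aggregation operator is product and the elimination operator is maximization.) -/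
open scoped NNReal

/-!
Maximizing over `σ` is the same as maximizing over `σ` and over a new value `d` of `x`, because `d`
may be the value that `σ` already has at `x`. The factors outside `B` do not notice the change of
`x`, so they are constant in the inner maximum and distributivity takes them out of it.
-/

section Elimination

variable {V : Type*} [DecidableEq V] {D : V → Type*} [∀ v, Nonempty (D v)]
  {R : Type*} [ConditionallyCompleteLattice R]

theorem ciSup_ciSup_update {f : (∀ v, D v) → R} (hf : BddAbove (Set.range f)) (x : V) :
    ⨆ σ, ⨆ d : D x, f (Function.update σ x d) = ⨆ σ, f σ := by
  have update_bdd (σ : ∀ v, D v) : BddAbove (Set.range fun d : D x => f (Function.update σ x d)) :=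
    hf.mono (Set.range_comp_subset_range (Function.update σ x) f)
  have inner_le (σ : ∀ v, D v) : ⨆ d : D x, f (Function.update σ x d) ≤ ⨆ τ, f τ :=
    ciSup_le fun d => le_ciSup hf (Function.update σ x d)
  have le_inner (σ : ∀ v, D v) : f σ ≤ ⨆ d : D x, f (Function.update σ x d) :=
    le_ciSup_of_le (update_bdd σ) (σ x) (congrArg f (Function.update_eq_self x σ)).ge
  exact le_antisymm (ciSup_le inner_le)
    (ciSup_mono ⟨_, Set.forall_mem_range.2 inner_le⟩ le_inner)

-- `hmul` is restricted to bounded families because an unbounded supremum is a junk value, over which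
-- multiplication need not distribute (for instance in a conditionally complete ordered group).
theorem ciSup_mul_eq_ciSup_mul_ciSup_update [Mul R] {x : V} {a b : (∀ v, D v) → R}
    (hmul : ∀ (c : R) (g : D x → R), BddAbove (Set.range fun d => c * g d) →
      c * ⨆ d, g d = ⨆ d, c * g d)
    (ha : ∀ (σ : ∀ v, D v) (d : D x), a σ = a (Function.update σ x d))
    (hbdd : BddAbove (Set.range fun σ => a σ * b σ)) :
    ⨆ σ, a σ * b σ = ⨆ σ, a σ * ⨆ d : D x, b (Function.update σ x d) := by
  have update_bdd (σ : ∀ v, D v) :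
      BddAbove (Set.range fun d : D x => a σ * b (Function.update σ x d)) := by
    simpa only [Function.comp_def, ← ha] using
      hbdd.mono (Set.range_comp_subset_range (Function.update σ x) _)
  calc ⨆ σ, a σ * b σ
      = ⨆ σ, ⨆ d : D x, a (Function.update σ x d) * b (Function.update σ x d) :=
        (ciSup_ciSup_update hbdd x).symm
    _ = ⨆ σ, ⨆ d : D x, a σ * b (Function.update σ x d) := by simp only [← ha]
    _ = ⨆ σ, a σ * ⨆ d : D x, b (Function.update σ x d) :=
        iSup_congr fun σ => (hmul _ _ (update_bdd σ)).symm

end Elimination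

theorem mpe_bucket_elimination_step_correct_general
    {V : Type*} [DecidableEq V] {D : V → Type*} [∀ v, Nonempty (D v)]
    {R : Type*} [ConditionallyCompleteLattice R] [CommMonoid R]
    {I : Type*} [Fintype I] [DecidableEq I]
    (p : I → (∀ v, D v) → R) (x : V) (B : Finset I)
    (hmul : ∀ (c : R) (g : D x → R), BddAbove (Set.range fun d => c * g d) →
      c * ⨆ d, g d = ⨆ d, c * g d)
    (hindep : ∀ i ∉ B, ∀ (σ : ∀ v, D v) (d : D x), p i σ = p i (Function.update σ x d))
    (hbdd : BddAbove (Set.range fun σ => ∏ i, p i σ)) :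
    (⨆ σ : ∀ v, D v, ∏ i : I, p i σ)
      = ⨆ σ : ∀ v, D v,
          (∏ i ∈ Bᶜ, p i σ) * ⨆ d : D x, ∏ i ∈ B, p i (Function.update σ x d) := by
  have prod_indep (σ : ∀ v, D v) (d : D x) :
      ∏ i ∈ Bᶜ, p i σ = ∏ i ∈ Bᶜ, p i (Function.update σ x d) :=
    Finset.prod_congr rfl fun i hi => hindep i (Finset.mem_compl.mp hi) σ d
  simp only [← Finset.prod_compl_mul_prod B] at hbdd ⊢
  exact ciSup_mul_eq_ciSup_mul_ciSup_update hmul prod_indep hbdd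

/-- **Correctness of one variable-elimination step of Bucket Elimination for the
MPE (max-product) task.** If every `p i` with `i ∉ B` does not depend on `x`, then
`max_σ Π_{i ∈ I} p i σ` equals
`max_σ ((Π_{i ∈ I \ B} p i σ) * max_{d ∈ D x} Π_{i ∈ B} p i (σ[x := d]))`. -/
theorem mpe_bucket_elimination_step_correct
    {V : Type*} [Fintype V] [DecidableEq V]
    {D : V → Type*} [∀ v, Fintype (D v)] [∀ v, Nonempty (D v)]
    {I : Type*} [Fintype I] [DecidableEq I]
    (p : I → (∀ v, D v) → ℝ≥0) (x : V) (B : Finset I)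
    (hindep : ∀ i ∉ B, ∀ (σ : ∀ v, D v) (d : D x), p i σ = p i (Function.update σ x d)) :
    (⨆ σ : ∀ v, D v, ∏ i : I, p i σ)
      = ⨆ σ : ∀ v, D v,
          (∏ i ∈ Bᶜ, p i σ) * ⨆ d : D x, ∏ i ∈ B, p i (Function.update σ x d) :=
  mpe_bucket_elimination_step_correct_general p x B (fun c g _ => NNReal.mul_iSup g c) hindep
    (Set.finite_range _).bddAbove
end

section
/- Let x be a variable, σ a complete assignment, and (p_i)_{i∈I} a finite family of functions from complete assignments to the nonnegative reals. For any partition of I into parts B_1, …, B_m it holds that max_{d ∈ D x} Π_{i ∈ I} p_i(σ[x := d]) ≤ Π_{k=1}^{m} max_{d ∈ D x} Π_{i ∈ B_k} p_i(σ[x := d]). (Eliminating a variable using mini-buckets in the max-product (MPE) setting produces an upper bound on the eliminated bucket function.) -/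
open scoped NNReal

theorem ciSup_finsetProd_le_finsetProd_ciSup
    {M ι κ : Type*} [CommMonoid M] [ConditionallyCompleteLattice M] [IsOrderedMonoid M]
    [Nonempty ι] {s : Finset κ} {f : κ → ι → M}
    (hbdd : ∀ k ∈ s, BddAbove (Set.range (f k))) :
    ⨆ i, ∏ k ∈ s, f k i ≤ ∏ k ∈ s, ⨆ i, f k i :=
  ciSup_le fun i => Finset.prod_le_prod' fun k hk => le_ciSup (hbdd k hk) i

theorem mpe_minibucket_upper_bound_general
    {V : Type*} [DecidableEq V] {D : V → Type*}
    {I K M : Type*} [DecidableEq I]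
    [CommMonoid M] [ConditionallyCompleteLattice M] [IsOrderedMonoid M]
    (p : I → (∀ v, D v) → M) (x : V) (σ : ∀ v, D v) {s : Finset K} {B : K → Finset I}
    (hdisj : (s : Set K).PairwiseDisjoint B)
    (hbdd : ∀ k ∈ s, BddAbove (Set.range fun d : D x =>
      ∏ i ∈ B k, p i (Function.update σ x d))) :
    (⨆ d : D x, ∏ i ∈ s.biUnion B, p i (Function.update σ x d))
      ≤ ∏ k ∈ s, ⨆ d : D x, ∏ i ∈ B k, p i (Function.update σ x d) := by
  have : Nonempty (D x) := ⟨σ x⟩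
  simp only [Finset.prod_biUnion hdisj]
  exact ciSup_finsetProd_le_finsetProd_ciSup hbdd

/-- **Mini-bucket elimination upper bound in the max-product (MPE) setting.**
For a variable `x`, a complete assignment `σ`, a finite family of nonnegative
functions `p i`, and any partition of the index set `I` into mini-buckets
`B 1, …, B m`, we have
`max_{d ∈ D x} Π_{i ∈ I} p i (σ[x := d]) ≤ Π_k max_{d ∈ D x} Π_{i ∈ B k} p i (σ[x := d])`. -/
theorem mpe_minibucket_upper_bound
    {V : Type*} [Fintype V] [DecidableEq V]
    {D : V → Type*} [∀ v, Fintype (D v)] [∀ v, Nonempty (D v)]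
    {I : Type*} [Fintype I] [DecidableEq I]
    (p : I → (∀ v, D v) → ℝ≥0) (x : V) (σ : ∀ v, D v)
    {m : ℕ} (B : Fin m → Finset I)
    (hdisj : ∀ k l, k ≠ l → Disjoint (B k) (B l))
    (hcover : (Finset.univ : Finset I) = Finset.univ.biUnion B) :
    (⨆ d : D x, ∏ i : I, p i (Function.update σ x d))
      ≤ ∏ k : Fin m, ⨆ d : D x, ∏ i ∈ B k, p i (Function.update σ x d) := by
  rw [hcover]
  exact mpe_minibucket_upper_bound_general p x σ (fun k _ l _ hkl => hdisj k l hkl)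
    fun _ _ => (Set.finite_range _).bddAbove
end

section
/- Let D : Fin m → ℕ satisfy D j ≥ 1 for all j, let 1 ≤ s ≤ m, and let φ : Fin s → Fin m be strictly increasing with φ(s−1) = m−1. For every r < Π_{j < m} D j, letting v be the digit tuple with rank(v) = r, the lexicographic rank of the subtuple (v(φ 0), …, v(φ(s−1))) with respect to the radices D ∘ φ equals Σ_{k=0}^{s−2} ( Π_{j=k+1}^{s−1} D(φ j) ) · ( ⌊ r / Π_{j > φ(k)} D j ⌋ mod D(φ k) ) + ( r mod D(m−1) ). (Correctness of Equation (9), the index mapping from output bucket-table rows to input bucket-table rows used by the GPU aggregation kernel, where the input table's scope is a subsequence of the output table's scope sharing the same last variable.) -/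
/-!
In `lexRank D v`, the digits to the left of position `i` contribute a multiple of
`D i * ∏ k > i, D k`, and those to its right contribute less than `∏ k > i, D k`. Hence
`lexRank D v / (∏ k > i, D k) % D i = v i`: every digit of the subtuple can be read off the rank of
the whole tuple. At the last position the divisor is the empty product.
-/

lemma mul_add_mul_add_div_mod {b p d t : ℕ} (hd : d < b) (ht : t < p) (c : ℕ) :
    (b * p * c + (d * p + t)) / p % b = d :=
  calc (b * p * c + (d * p + t)) / p % b
      = (t + p * (d + b * c)) / p % b := by congr 2; ring
    _ = (d + b * c) % b := by
      rw [Nat.add_mul_div_left _ _ (Nat.zero_lt_of_lt ht), Nat.div_eq_of_lt ht, zero_add]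
    _ = d := by rw [Nat.add_mul_mod_self_left, Nat.mod_eq_of_lt hd]

section LexRank

variable {ι : Type*} [LinearOrder ι]

lemma sum_mul_prod_gt_lt_prod (s : Finset ι) (D v : ι → ℕ) (hv : ∀ j ∈ s, v j < D j) :
    ∑ j ∈ s, v j * ∏ k ∈ s with j < k, D k < ∏ j ∈ s, D j := by
  induction s using Finset.induction_on_min with
  | empty => simp
  | insert a s ha ih =>
    have ha_notMem : a ∉ s := fun h => lt_irrefl a (ha a h)
    have filter_min : (insert a s).filter (a < ·) = s := by
      rw [Finset.filter_insert, if_neg (lt_irrefl a), Finset.filter_true_of_mem ha]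
    have filter_rest : ∀ j ∈ s, (insert a s).filter (j < ·) = s.filter (j < ·) := fun j hj => by
      rw [Finset.filter_insert, if_neg (ha j hj).not_gt]
    have tail_lt : ∑ j ∈ s, v j * ∏ k ∈ insert a s with j < k, D k < ∏ j ∈ s, D j := by
      rw [Finset.sum_congr rfl fun j hj => by rw [filter_rest j hj]]
      exact ih fun j hj => hv j (Finset.mem_insert_of_mem hj)
    rw [Finset.sum_insert ha_notMem, Finset.prod_insert ha_notMem, filter_min]
    calc v a * ∏ j ∈ s, D j + ∑ j ∈ s, v j * ∏ k ∈ insert a s with j < k, D k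
        < v a * ∏ j ∈ s, D j + ∏ j ∈ s, D j := by gcongr
      _ = (v a + 1) * ∏ j ∈ s, D j := by ring
      _ ≤ D a * ∏ j ∈ s, D j := by gcongr; exact hv a (Finset.mem_insert_self a s)

variable [Fintype ι]

lemma mul_prod_gt_dvd_prod_gt {M : Type*} [CommMonoid M] (D : ι → M) {i j : ι} (hji : j < i) :
    D i * ∏ k with i < k, D k ∣ ∏ k with j < k, D k := by
  rw [← Finset.prod_insert (by simp)]
  refine Finset.prod_dvd_prod_of_subset _ _ D fun k hk => ?_
  rcases Finset.mem_insert.mp hk with rfl | hik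
  · simpa using hji
  · simpa using hji.trans (Finset.mem_filter_univ k |>.mp hik)

lemma sum_eq_sum_lt_add_add_sum_gt {M : Type*} [AddCommMonoid M] (f : ι → M) (i : ι) :
    ∑ j, f j = ∑ j with j < i, f j + (f i + ∑ j with i < j, f j) := by
  have filter_not_lt :
      Finset.univ.filter (fun j => ¬ j < i) = insert i (Finset.univ.filter (i < ·)) := by
    ext j
    simp [le_iff_eq_or_lt, eq_comm]
  rw [← Finset.sum_filter_add_sum_filter_not Finset.univ (· < i), filter_not_lt,
    Finset.sum_insert (by simp)]

/-- The lexicographic rank of the digit tuple `v` for the radices `D`, with the smallest index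
as the most significant position. The indices range over any finite linear order, so that a
tuple and its subtuples are treated alike. -/
def lexRank (D : ι → ℕ) (v : ∀ j, Fin (D j)) : ℕ :=
  ∑ j, (v j : ℕ) * ∏ k with j < k, D k

variable (D : ι → ℕ) (v : ∀ j, Fin (D j))

lemma sum_gt_mul_prod_gt_lt_prod_gt (i : ι) :
    ∑ j with i < j, (v j : ℕ) * ∏ k with j < k, D k < ∏ k with i < k, D k := by
  have filter_gt : ∀ j ∈ Finset.univ.filter (i < ·),
      (Finset.univ.filter (i < ·)).filter (j < ·) = Finset.univ.filter (j < ·) := fun j hj => by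
    rw [Finset.filter_filter]
    exact Finset.filter_congr fun k _ =>
      and_iff_right_of_imp ((Finset.mem_filter_univ j).mp hj).trans
  rw [Finset.sum_congr rfl fun j hj => by rw [← filter_gt j hj]]
  exact sum_mul_prod_gt_lt_prod _ D (fun j => v j) fun j _ => (v j).isLt

theorem lexRank_div_prod_gt_mod (i : ι) :
    lexRank D v / (∏ k with i < k, D k) % D i = v i := by
  have tail_lt := sum_gt_mul_prod_gt_lt_prod_gt D v i
  obtain ⟨c, hc⟩ : D i * ∏ k with i < k, D k ∣
      ∑ j with j < i, (v j : ℕ) * ∏ k with j < k, D k := by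
    refine Finset.dvd_sum fun j hj => Dvd.dvd.mul_left ?_ _
    exact mul_prod_gt_dvd_prod_gt D ((Finset.mem_filter_univ j).mp hj)
  rw [lexRank, sum_eq_sum_lt_add_add_sum_gt _ i, hc]
  exact mul_add_mul_add_div_mod (v i).isLt tail_lt c

theorem lexRank_mod_top [OrderTop ι] : lexRank D v % D ⊤ = v ⊤ := by
  simpa using lexRank_div_prod_gt_mod D v ⊤

end LexRank

theorem gpu_aggregate_index_mapping_general
    {ι : Type*} [LinearOrder ι] [Fintype ι] [OrderTop ι] (D : ι → ℕ) (v : ∀ j, Fin (D j))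
    {s : ℕ} (φ : Fin (s + 1) → ι) (hlast : φ (Fin.last s) = ⊤) :
    lexRank (fun k => D (φ k)) (fun k => v (φ k))
      = ∑ k : Fin s, (∏ j with k.castSucc < j, D (φ j)) *
            (lexRank D v / (∏ j with φ k.castSucc < j, D j) % D (φ k.castSucc))
        + lexRank D v % D ⊤ := by
  simp only [lexRank_div_prod_gt_mod, lexRank_mod_top]
  rw [lexRank, Fin.sum_univ_castSucc, hlast]
  congr 1
  · exact Finset.sum_congr rfl fun k _ => mul_comm _ _
  · simp [fun k : Fin (s + 1) => (Fin.le_last k).not_gt]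

/-- **Correctness of the GPU aggregation index mapping (Equation (9)).**
Let `D : Fin m → ℕ` be radices with `D j ≥ 1`, `1 ≤ s ≤ m`, and let
`φ : Fin s → Fin m` be strictly increasing with `φ (s-1) = m-1` (the input table's
scope is a subsequence of the output table's scope sharing the same last variable).
For every output row index `r < Π_j D j`, letting `v` be the digit tuple of rank `r`,
the lexicographic rank of the subtuple `(v (φ 0), …, v (φ (s-1)))` with respect to
the radices `D ∘ φ` equals
`Σ_{k=0}^{s-2} (Π_{j=k+1}^{s-1} D (φ j)) · ((r / Π_{j > φ k} D j) % D (φ k)) + r % D (m-1)`. -/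
theorem gpu_aggregate_index_mapping
    (m s : ℕ) (D : Fin m → ℕ) (hD : ∀ j, 1 ≤ D j)
    (hs1 : 1 ≤ s) (hsm : s ≤ m)
    (φ : Fin s → Fin m) (hφ : StrictMono φ)
    (hlast : φ ⟨s - 1, by omega⟩ = ⟨m - 1, by omega⟩)
    (r : ℕ) (hr : r < ∏ j, D j)
    (v : ∀ j, Fin (D j))
    (hv : ∑ j, (v j : ℕ) * ∏ k ∈ Finset.univ.filter (fun k => j < k), D k = r) :
    (∑ k : Fin s, (v (φ k) : ℕ) * ∏ l ∈ Finset.univ.filter (fun l : Fin s => k < l), D (φ l))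
      = (∑ k : Fin (s - 1),
          (∏ j ∈ Finset.univ.filter (fun j : Fin s => (k : ℕ) < (j : ℕ)), D (φ j)) *
            ((r / ∏ j ∈ Finset.univ.filter
                (fun j : Fin m => φ (Fin.castLE (Nat.sub_le s 1) k) < j), D j)
              % D (φ (Fin.castLE (Nat.sub_le s 1) k))))
        + r % D ⟨m - 1, by omega⟩ := by
  obtain ⟨s, rfl⟩ := Nat.exists_eq_add_of_le' hs1
  obtain ⟨m, rfl⟩ := Nat.exists_eq_add_of_le' (hs1.trans hsm)
  exact hv ▸ gpu_aggregate_index_mapping_general D v φ hlast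
end
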